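/- arXiv:1412.2267 — 2 statements merged into one kernel-verified Lean document; each statement's English description precedes it below -/
import Mathlib

section
/- The equivalence relation on generalized rectangular diagrams generated by the elementary moves of type N (cyclic permutations, commutations, stabilizations and destabilizations of type N, end shifts of type N, and vertex additions) coincides with the equivalence relation generated by commutations, end shifts of type N and vertex additions alone. -/
namespace RectDiag

/-- A generalized rectangular diagram: a finite subset of `ℝ²`, whose elements are
called the vertices of the diagram. -/
abbrev GRD := Finset (ℝ × ℝ)

/-- Two diagrams are combinatorially equivalent (and hence identified) if one maps onto
the other under `(x, y) ↦ (f x, g y)` for some strictly increasing `f g : ℝ → ℝ`. -/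
def CombEquiv (R R' : GRD) : Prop :=
  ∃ f g : ℝ → ℝ, StrictMono f ∧ StrictMono g ∧
    R' = R.image fun p => (f p.1, g p.2)

/-- Move every vertex on the vertical line `x = a` to the vertical line `x = b`. -/
noncomputable def moveCol (R : GRD) (a b : ℝ) : GRD :=
  R.image fun p => if p.1 = a then (b, p.2) else p

/-- Move every vertex on the horizontal line `y = a` to the horizontal line `y = b`. -/
noncomputable def moveRow (R : GRD) (a b : ℝ) : GRD :=
  R.image fun p => if p.2 = a then (p.1, b) else p

/-- Cyclic permutation: an extreme (rightmost, leftmost, top or bottom) edge is moved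
to the opposite side of the diagram; only the coordinate perpendicular to the edge
changes. -/
def CyclicPermutation (R R' : GRD) : Prop :=
  (∃ a b : ℝ, (∃ p ∈ R, p.1 = a) ∧
    (((∀ p ∈ R, p.1 ≤ a) ∧ ∀ p ∈ R, b < p.1) ∨
     ((∀ p ∈ R, a ≤ p.1) ∧ ∀ p ∈ R, p.1 < b)) ∧
    R' = moveCol R a b) ∨
  (∃ a b : ℝ, (∃ p ∈ R, p.2 = a) ∧
    (((∀ p ∈ R, p.2 ≤ a) ∧ ∀ p ∈ R, b < p.2) ∨
     ((∀ p ∈ R, a ≤ p.2) ∧ ∀ p ∈ R, p.2 < b)) ∧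
    R' = moveRow R a b)

/-- Two sets of reals interleave in the cyclic order: their elements alternate
`a₁ < b₁ < a₂ < b₂` (or with the roles of the two sets exchanged). -/
def Interleave (A B : ℝ → Prop) : Prop :=
  (∃ a₁, A a₁ ∧ ∃ b₁, B b₁ ∧ ∃ a₂, A a₂ ∧ ∃ b₂, B b₂ ∧ a₁ < b₁ ∧ b₁ < a₂ ∧ a₂ < b₂) ∨
  (∃ b₁, B b₁ ∧ ∃ a₁, A a₁ ∧ ∃ b₂, B b₂ ∧ ∃ a₂, A a₂ ∧ b₁ < a₁ ∧ a₁ < b₂ ∧ b₂ < a₂)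

/-- Exchange the vertical lines `x = a` and `x = b` of a diagram. -/
noncomputable def swapCols (R : GRD) (a b : ℝ) : GRD :=
  R.image fun p => if p.1 = a then (b, p.2) else if p.1 = b then (a, p.2) else p

/-- Exchange the horizontal lines `y = a` and `y = b` of a diagram. -/
noncomputable def swapRows (R : GRD) (a b : ℝ) : GRD :=
  R.image fun p => if p.2 = a then (p.1, b) else if p.2 = b then (p.1, a) else p

/-- Commutation: two neighboring parallel edges (no vertex lies strictly between the
two parallel lines containing them) that do not interleave exchange their positions. -/
def Commutation (R R' : GRD) : Prop :=
  (∃ a b : ℝ, a < b ∧ (∃ p ∈ R, p.1 = a) ∧ (∃ p ∈ R, p.1 = b) ∧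
    (∀ p ∈ R, ¬ (a < p.1 ∧ p.1 < b)) ∧
    ¬ Interleave (fun y => (a, y) ∈ R) (fun y => (b, y) ∈ R) ∧
    R' = swapCols R a b) ∨
  (∃ a b : ℝ, a < b ∧ (∃ p ∈ R, p.2 = a) ∧ (∃ p ∈ R, p.2 = b) ∧
    (∀ p ∈ R, ¬ (a < p.2 ∧ p.2 < b)) ∧
    ¬ Interleave (fun x => (x, a) ∈ R) (fun x => (x, b) ∈ R) ∧
    R' = swapRows R a b)

def strictlyBetween (a t b : ℝ) : Prop := (a < t ∧ t < b) ∨ (b < t ∧ t < a)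

/-- Stabilization: a vertex `(x, y)` is replaced by the three other corners of a small
square with corners `(x, y)`, `(x', y)`, `(x, y')`, `(x', y')` (fresh lines `x'`, `y'`,
with no vertex of the diagram strictly between the lines `x, x'` nor between `y, y'`).
The two new short edges (sides of the square through the corner `(x', y')`) emerge from
their common end downward-and-leftward or upward-and-rightward exactly when the square
lies to the upper right or to the lower left of the original vertex (type L,
`typeL = true`); for type N (`typeL = false`) they emerge upward-and-leftward or
downward-and-rightward, i.e. the square lies to the upper left or to the lower right. -/
def Stab (typeL : Bool) (R R' : GRD) : Prop :=
  ∃ x y x' y' : ℝ, (x, y) ∈ R ∧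
    (if typeL then ((x < x' ∧ y < y') ∨ (x' < x ∧ y' < y))
     else ((x' < x ∧ y < y') ∨ (x < x' ∧ y' < y))) ∧
    (∀ p ∈ R, ¬ strictlyBetween x p.1 x') ∧
    (∀ p ∈ R, ¬ strictlyBetween y p.2 y') ∧
    (∀ p ∈ R, p.1 ≠ x') ∧ (∀ p ∈ R, p.2 ≠ y') ∧
    R' = insert (x', y) (insert (x, y') (insert (x', y') (R.erase (x, y))))

/-- End shift.  For adjacent vertices `v₁`, `v₂` on an edge (no vertex of the diagram
between them on the edge), where for type L (`typeL = true`) the vertex `v₂` has the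
greater coordinate along the edge and for type N (`typeL = false`) the smaller one:
either the shifts of `v₁`, `v₂` by `ε > 0` in the positive perpendicular direction are
added and `v₁` is removed, or the shifts by `ε` in the negative perpendicular direction
are added and `v₂` is removed; `ε` is small enough that no vertex of the diagram lies
between (or on) the line through `v₁, v₂` and the line through the shifted vertices. -/
def EndShift (typeL : Bool) (R R' : GRD) : Prop :=
  (∃ a y₁ y₂ ε : ℝ, 0 < ε ∧ y₁ < y₂ ∧ (a, y₁) ∈ R ∧ (a, y₂) ∈ R ∧
    (∀ t : ℝ, (a, t) ∈ R → ¬ (y₁ < t ∧ t < y₂)) ∧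
    (((∀ p ∈ R, ¬ (a < p.1 ∧ p.1 ≤ a + ε)) ∧
       R' = insert (a + ε, y₁) (insert (a + ε, y₂)
         (R.erase (a, if typeL then y₁ else y₂)))) ∨
     ((∀ p ∈ R, ¬ (a - ε ≤ p.1 ∧ p.1 < a)) ∧
       R' = insert (a - ε, y₁) (insert (a - ε, y₂)
         (R.erase (a, if typeL then y₂ else y₁)))))) ∨
  (∃ a x₁ x₂ ε : ℝ, 0 < ε ∧ x₁ < x₂ ∧ (x₁, a) ∈ R ∧ (x₂, a) ∈ R ∧
    (∀ t : ℝ, (t, a) ∈ R → ¬ (x₁ < t ∧ t < x₂)) ∧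
    (((∀ p ∈ R, ¬ (a < p.2 ∧ p.2 ≤ a + ε)) ∧
       R' = insert (x₁, a + ε) (insert (x₂, a + ε)
         (R.erase (if typeL then x₁ else x₂, a)))) ∨
     ((∀ p ∈ R, ¬ (a - ε ≤ p.2 ∧ p.2 < a)) ∧
       R' = insert (x₁, a - ε) (insert (x₂, a - ε)
         (R.erase (if typeL then x₂ else x₁, a))))))

/-- Vertex addition: a new vertex is added on the vertical (respectively horizontal)
line through an existing vertex, provided no vertex of the diagram lies on the
horizontal (respectively vertical) line through the new vertex. -/
def VertexAddition (R R' : GRD) : Prop :=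
  ∃ v : ℝ × ℝ, v ∉ R ∧ R' = insert v R ∧
    (((∃ w ∈ R, w.1 = v.1) ∧ ∀ w ∈ R, w.2 ≠ v.2) ∨
     ((∃ w ∈ R, w.2 = v.2) ∧ ∀ w ∈ R, w.1 ≠ v.1))

/-- An elementary move of type L (`typeL = true`) or N (`typeL = false`): a cyclic
permutation, a commutation, a stabilization or destabilization of the given type, an
end shift of the given type, or a vertex addition. -/
def ElemMove (typeL : Bool) (R R' : GRD) : Prop :=
  CyclicPermutation R R' ∨ Commutation R R' ∨ Stab typeL R R' ∨ Stab typeL R' R ∨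
    EndShift typeL R R' ∨ VertexAddition R R'

/-- One step in a sequence of elementary moves of the given type; since diagrams are
identified up to combinatorial equivalence, combinatorially equivalent diagrams are
also related by a step. -/
def Step (typeL : Bool) (R R' : GRD) : Prop :=
  ElemMove typeL R R' ∨ CombEquiv R R'

/-- In the cyclic order (on `ℝ` closed up into a circle), the elements of `A`, then the
point `u`, then the elements of `B` occur in this cyclic order. -/
def CyclicBetween (A : Finset ℝ) (u : ℝ) (B : Finset ℝ) : Prop :=
  ((∀ a ∈ A, a < u) ∧ (∀ b ∈ B, u < b)) ∨
  ((∀ b ∈ B, u < b) ∧ (∀ a ∈ A, ∀ b ∈ B, b < a)) ∨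
  ((∀ a ∈ A, a < u) ∧ (∀ a ∈ A, ∀ b ∈ B, b < a))

/-- Edge breaking.  The vertices of a horizontal (respectively vertical) edge on the
line `c` are separated into two nonempty parts `S₁`, `S₂`, placed on neighboring lines
`c₁ ≤ c ≤ c₂` (`c₁ < c₂`, with no other vertex of the diagram between the lines `c₁`
and `c₂`), forming edges `e₁` (from `S₁`, on `c₁`) and `e₂` (from `S₂`, on `c₂`, the one
with the greater perpendicular coordinate); the two pieces are joined by a short edge on
a fresh line `u`, which in the cyclic order is greater than the coordinates of the
vertices of `e₂` and smaller than those of `e₁` for type L, and the other way around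
(the roles of `e₁` and `e₂` exchanged) for type N. -/
def EdgeBreaking (typeL : Bool) (R R' : GRD) : Prop :=
  (∃ c c₁ c₂ u : ℝ, ∃ S₁ S₂ : Finset ℝ,
    c₁ < c₂ ∧ c₁ ≤ c ∧ c ≤ c₂ ∧ S₁.Nonempty ∧ S₂.Nonempty ∧ Disjoint S₁ S₂ ∧
    (∀ x : ℝ, (x, c) ∈ R ↔ x ∈ S₁ ∪ S₂) ∧
    (∀ p ∈ R, p.1 ≠ u) ∧
    (∀ p ∈ R, c₁ ≤ p.2 ∧ p.2 ≤ c₂ → p.2 = c) ∧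
    (if typeL then CyclicBetween S₂ u S₁ else CyclicBetween S₁ u S₂) ∧
    R' = ((R.filter fun p => p.2 ≠ c) ∪ S₁.image (fun x => (x, c₁)) ∪
      S₂.image (fun x => (x, c₂)) ∪ {(u, c₁), (u, c₂)})) ∨
  (∃ c c₁ c₂ u : ℝ, ∃ S₁ S₂ : Finset ℝ,
    c₁ < c₂ ∧ c₁ ≤ c ∧ c ≤ c₂ ∧ S₁.Nonempty ∧ S₂.Nonempty ∧ Disjoint S₁ S₂ ∧
    (∀ y : ℝ, (c, y) ∈ R ↔ y ∈ S₁ ∪ S₂) ∧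
    (∀ p ∈ R, p.2 ≠ u) ∧
    (∀ p ∈ R, c₁ ≤ p.1 ∧ p.1 ≤ c₂ → p.1 = c) ∧
    (if typeL then CyclicBetween S₂ u S₁ else CyclicBetween S₁ u S₂) ∧
    R' = ((R.filter fun p => p.1 ≠ c) ∪ S₁.image (fun y => (c₁, y)) ∪
      S₂.image (fun y => (c₂, y)) ∪ {(c₁, u), (c₂, u)}))

/-- `p` lies in the open rectangle `(x₀, x₁) × (y₀, y₁)`. -/
def inRect (x₀ x₁ y₀ y₁ : ℝ) (p : ℝ × ℝ) : Prop :=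
  x₀ < p.1 ∧ p.1 < x₁ ∧ y₀ < p.2 ∧ p.2 < y₁

/-- A flype of type L (in the forward direction): for `x₀ < x₁ < x₂`, `y₀ < y₁ < y₂`,
with rectangles `r_ij = (x_i, x_{i+1}) × (y_j, y_{j+1})`: the rectangle `r₁₁` contains
no vertex; in each of `r₀₁` and `r₁₀`, of any two vertices the right one is higher; and
every vertex `v` in `r₀₀` has a vertex `v₀₁ ∈ r₀₁` with the same `x`-coordinate and a
vertex `v₁₀ ∈ r₁₀` with the same `y`-coordinate.  The move takes each such `v` to the
fourth corner of the rectangle with corners `v`, `v₀₁`, `v₁₀`, all other vertices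
staying fixed. -/
def FlypeLOnce (R R' : GRD) : Prop :=
  ∃ x₀ x₁ x₂ y₀ y₁ y₂ : ℝ, x₀ < x₁ ∧ x₁ < x₂ ∧ y₀ < y₁ ∧ y₁ < y₂ ∧
    (∀ p ∈ R, ¬ inRect x₁ x₂ y₁ y₂ p) ∧
    (∀ p ∈ R, ∀ q ∈ R, inRect x₀ x₁ y₁ y₂ p → inRect x₀ x₁ y₁ y₂ q →
      p.1 < q.1 → p.2 < q.2) ∧
    (∀ p ∈ R, ∀ q ∈ R, inRect x₁ x₂ y₀ y₁ p → inRect x₁ x₂ y₀ y₁ q →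
      p.1 < q.1 → p.2 < q.2) ∧
    ∃ φ : ℝ × ℝ → ℝ × ℝ,
      (∀ p ∈ R, ¬ inRect x₀ x₁ y₀ y₁ p → φ p = p) ∧
      (∀ p ∈ R, inRect x₀ x₁ y₀ y₁ p →
        ∃ q ∈ R, ∃ r ∈ R, inRect x₀ x₁ y₁ y₂ q ∧ q.1 = p.1 ∧
          inRect x₁ x₂ y₀ y₁ r ∧ r.2 = p.2 ∧ φ p = (r.1, q.2)) ∧
      R' = R.image φ

/-- A flype of type L: the move just described or its inverse. -/
def FlypeL (R R' : GRD) : Prop := FlypeLOnce R R' ∨ FlypeLOnce R' R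

/-- A fence diagram: posts are horizontal segments `[l, r] × {y}`, `y ∈ posts` (all
related by a vertical shift); wires are vertical segments recorded as
`(x, bottom level, top level)`, with endpoints interior to posts and no two wires on
the same vertical line. -/
structure Fence where
  posts : Finset ℝ
  l : ℝ
  r : ℝ
  wires : Finset (ℝ × ℝ × ℝ)
  hlr : l < r
  hx : ∀ w ∈ wires, l < w.1 ∧ w.1 < r
  hy : ∀ w ∈ wires, w.2.1 ∈ posts ∧ w.2.2 ∈ posts ∧ w.2.1 < w.2.2
  hinj : ∀ w ∈ wires, ∀ w' ∈ wires, w.1 = w'.1 → w = w'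

/-- Combinatorial equivalence of fence diagrams. -/
def FenceEquiv (F F' : Fence) : Prop :=
  ∃ f g : ℝ → ℝ, StrictMono f ∧ StrictMono g ∧
    F'.l = f F.l ∧ F'.r = f F.r ∧
    F'.posts = F.posts.image g ∧
    F'.wires = F.wires.image fun w => (f w.1, g w.2.1, g w.2.2)

/-- The wire on the vertical line `x` joining the posts at levels `p` and `q`. -/
noncomputable def mkWire (x p q : ℝ) : ℝ × ℝ × ℝ := (x, min p q, max p q)

/-- Twirl: the top (respectively bottom) post is moved to the opposite side, taking
along all wires attached to it. -/
def Twirl (F F' : Fence) : Prop :=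
  F'.l = F.l ∧ F'.r = F.r ∧
  ((∃ t b : ℝ, t ∈ F.posts ∧ (∀ y ∈ F.posts, y ≤ t) ∧ (∀ y ∈ F.posts, b < y) ∧
     F'.posts = insert b (F.posts.erase t) ∧
     F'.wires = F.wires.image fun w => if w.2.2 = t then (w.1, b, w.2.1) else w) ∨
   (∃ t b : ℝ, b ∈ F.posts ∧ (∀ y ∈ F.posts, b ≤ y) ∧ (∀ y ∈ F.posts, y < t) ∧
     F'.posts = insert t (F.posts.erase b) ∧
     F'.wires = F.wires.image fun w => if w.2.1 = b then (w.1, w.2.2, t) else w))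

/-- Turn: the rightmost (respectively leftmost) wire is moved to the opposite side. -/
def Turn (F F' : Fence) : Prop :=
  F'.l = F.l ∧ F'.r = F.r ∧ F'.posts = F.posts ∧
  ((∃ w ∈ F.wires, ∃ x : ℝ, (∀ w' ∈ F.wires, w'.1 ≤ w.1) ∧
     F.l < x ∧ (∀ w' ∈ F.wires, w' ≠ w → x < w'.1) ∧ x < w.1 ∧
     F'.wires = insert (x, w.2) (F.wires.erase w)) ∨
   (∃ w ∈ F.wires, ∃ x : ℝ, (∀ w' ∈ F.wires, w.1 ≤ w'.1) ∧
     x < F.r ∧ (∀ w' ∈ F.wires, w' ≠ w → w'.1 < x) ∧ w.1 < x ∧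
     F'.wires = insert (x, w.2) (F.wires.erase w)))

/-- Two wires interleave if exactly one endpoint level of one lies strictly between the
endpoint levels of the other. -/
def WiresInterleave (w w' : ℝ × ℝ × ℝ) : Prop :=
  (w.2.1 < w'.2.1 ∧ w'.2.1 < w.2.2 ∧ w.2.2 < w'.2.2) ∨
  (w'.2.1 < w.2.1 ∧ w.2.1 < w'.2.2 ∧ w'.2.2 < w.2.2)

/-- Slip: two neighboring non-interleaving wires exchange their horizontal positions. -/
def Slip (F F' : Fence) : Prop :=
  F'.l = F.l ∧ F'.r = F.r ∧ F'.posts = F.posts ∧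
  ∃ w₁ ∈ F.wires, ∃ w₂ ∈ F.wires, w₁.1 < w₂.1 ∧
    (∀ w ∈ F.wires, ¬ (w₁.1 < w.1 ∧ w.1 < w₂.1)) ∧
    ¬ WiresInterleave w₁ w₂ ∧
    F'.wires = insert (w₂.1, w₁.2) (insert (w₁.1, w₂.2) ((F.wires.erase w₁).erase w₂))

/-- `a`, `b`, `c` occur in this cyclic order on `ℝ` closed up into a circle. -/
def CyclicOrd3 (a b c : ℝ) : Prop :=
  (a < b ∧ b < c) ∨ (b < c ∧ c < a) ∨ (c < a ∧ a < b)

/-- Slide: given two neighboring wires, the left joining posts at levels `a` and `b`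
and the right joining posts at levels `a` and `c` with `a < b < c < a` in the cyclic
order, they are replaced by two wires at the same horizontal positions, the left
joining levels `b` and `c` and the right joining levels `b` and `a`. -/
def Slide (F F' : Fence) : Prop :=
  F'.l = F.l ∧ F'.r = F.r ∧ F'.posts = F.posts ∧
  ∃ a b c x₁ x₂ : ℝ, x₁ < x₂ ∧ CyclicOrd3 a b c ∧
    mkWire x₁ a b ∈ F.wires ∧ mkWire x₂ a c ∈ F.wires ∧
    (∀ w ∈ F.wires, ¬ (x₁ < w.1 ∧ w.1 < x₂)) ∧
    F'.wires = insert (mkWire x₁ b c) (insert (mkWire x₂ b a)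
      ((F.wires.erase (mkWire x₁ a b)).erase (mkWire x₂ a c)))

/-- Inflation: a new post is added at a fresh vertical level and joined to some
existing post by one new wire (on a fresh vertical line). -/
def Inflation (F F' : Fence) : Prop :=
  F'.l = F.l ∧ F'.r = F.r ∧
  ∃ n m x : ℝ, n ∉ F.posts ∧ m ∈ F.posts ∧
    F.l < x ∧ x < F.r ∧ (∀ w ∈ F.wires, w.1 ≠ x) ∧
    F'.posts = insert n F.posts ∧
    F'.wires = insert (mkWire x n m) F.wires

/-- A fence move: a twirl, a turn, a slip, a slide, an inflation or a deflation. -/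
def FenceMove (F F' : Fence) : Prop :=
  Twirl F F' ∨ Turn F F' ∨ Slip F F' ∨ Slide F F' ∨ Inflation F F' ∨ Inflation F' F

/-- One step in a sequence of fence moves; combinatorially equivalent fence diagrams
are identified. -/
def FenceStep (F F' : Fence) : Prop := FenceMove F F' ∨ FenceEquiv F F'

/-- `R(F)`: the generalized rectangular diagram whose vertices are the endpoints of
the wires of the fence diagram `F`. -/
noncomputable def fenceToGRD (F : Fence) : GRD :=
  F.wires.image (fun w => (w.1, w.2.1)) ∪ F.wires.image (fun w => (w.1, w.2.2))

/-- Every vertical edge of the diagram contains exactly two vertices. -/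
def VertTwo (R : GRD) : Prop :=
  ∀ a : ℝ, (∃ y : ℝ, (a, y) ∈ R) →
    ∃ y₁ y₂ : ℝ, y₁ < y₂ ∧ ∀ y : ℝ, ((a, y) ∈ R ↔ (y = y₁ ∨ y = y₂))

/-- `F` is a fence diagram `F(R)` of the diagram `R` (each of whose vertical edges is
assumed to contain exactly two vertices): its wires are the vertical edges of `R` and
its posts are horizontal segments at exactly the levels of the horizontal edges of
`R`. -/
def IsFenceOf (R : GRD) (F : Fence) : Prop :=
  F.posts = R.image Prod.snd ∧
  ∀ w : ℝ × ℝ × ℝ,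
    (w ∈ F.wires ↔ ((w.1, w.2.1) ∈ R ∧ (w.1, w.2.2) ∈ R ∧ w.2.1 < w.2.2))

/-!
A stabilization of type N at `(x, y)` creating `(x', y')` is the vertex addition of `(x, y')`
followed by an end shift from the line `x` to the line `x'`, so only cyclic permutations require
an argument. By transposition it suffices to move the rightmost column, at `x = a`, to a new
leftmost position `x = b`.

Two vertex additions create a row with the two vertices `(a, u)` and `(b, u)`. Since the whole
diagram lies over `[b, a]`, this free edge interleaves with no other row, so commutations bring it
to any height. Placed just above a row whose last vertex lies on `x = a`, it merges with that row
by end shifts; other end shifts split off from the merged row a free edge just below it, and what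
remains is the original row with its vertex on `x = a` moved to `x = b`. Once all vertices of the
column have been transported in this way, the free edge is deleted again.
-/

/-- One of the moves retained in the reduced generating set: a commutation, an end shift of
type N, a vertex addition or a combinatorial equivalence. -/
def ReducedStep (R R' : GRD) : Prop :=
  Commutation R R' ∨ EndShift false R R' ∨ VertexAddition R R' ∨ CombEquiv R R'

/-- The equivalence relation on diagrams generated by the reduced set of moves. -/
def ReducedEquiv : GRD → GRD → Prop := Relation.EqvGen ReducedStep

local instance : HasEquiv GRD := ⟨ReducedEquiv⟩

theorem reducedEquiv_equivalence : Equivalence ReducedEquiv :=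
  Relation.EqvGen.is_equivalence _

namespace ReducedEquiv

variable {R R' R'' : GRD}

theorem refl (R : GRD) : R ≈ R := reducedEquiv_equivalence.refl R

theorem symm (h : R ≈ R') : R' ≈ R := reducedEquiv_equivalence.symm h

theorem trans (h : R ≈ R') (h' : R' ≈ R'') : R ≈ R'' := reducedEquiv_equivalence.trans h h'

instance : Trans ReducedEquiv ReducedEquiv ReducedEquiv := ⟨trans⟩

theorem of_commutation (h : Commutation R R') : R ≈ R' := .rel _ _ (.inl h)

theorem of_endShift (h : EndShift false R R') : R ≈ R' := .rel _ _ (.inr (.inl h))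

theorem of_vertexAddition (h : VertexAddition R R') : R ≈ R' :=
  .rel _ _ (.inr (.inr (.inl h)))

theorem of_combEquiv (h : CombEquiv R R') : R ≈ R' := .rel _ _ (.inr (.inr (.inr h)))

end ReducedEquiv

/-- The vertices at height `y` whose abscissae form the set `V`. -/
def row (V : Finset ℝ) (y : ℝ) : GRD := V ×ˢ {y}

@[simp, grind =]
theorem mem_row {V : Finset ℝ} {y : ℝ} {p : ℝ × ℝ} : p ∈ row V y ↔ p.1 ∈ V ∧ p.2 = y := by
  rw [row, Finset.mem_product, Finset.mem_singleton]

theorem image_row (V : Finset ℝ) (y : ℝ) (f g : ℝ → ℝ) :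
    (row V y).image (Prod.map f g) = row (V.image f) (g y) := by
  simp only [row, Finset.prodMap_image_product, Finset.image_singleton]

/-- No vertex of `S` lies in the closed horizontal strip `y₀ ≤ y ≤ y₁`. -/
def EmptyStrip (S : GRD) (y₀ y₁ : ℝ) : Prop :=
  ∀ p ∈ S, p.2 < y₀ ∨ y₁ < p.2

theorem exists_lt_forall_mem_lt {α : Type*} [LinearOrder α] [DenselyOrdered α] [NoMinOrder α]
    [NoMaxOrder α] (F : Finset α) (v : α) : ∃ w < v, ∀ t ∈ F, t < v → t < w := by
  have : Nonempty α := ⟨v⟩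
  obtain ⟨w, hFw, hwv⟩ := Order.exists_between_finsets (F.filter (· < v)) {v} (by grind)
  exact ⟨w, by grind, by grind⟩

theorem exists_gt_forall_mem_gt {α : Type*} [LinearOrder α] [DenselyOrdered α] [NoMinOrder α]
    [NoMaxOrder α] (F : Finset α) (v : α) : ∃ w > v, ∀ t ∈ F, v < t → w < t :=
  exists_lt_forall_mem_lt (α := αᵒᵈ) F v

namespace EmptyStrip

variable {S T : GRD} {y₀ y₁ z₀ z₁ : ℝ}

theorem mono (h : EmptyStrip S y₀ y₁) (h₀ : y₀ ≤ z₀) (h₁ : z₁ ≤ y₁) : EmptyStrip S z₀ z₁ :=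
  fun p hp => (h p hp).imp h₀.trans_lt' h₁.trans_lt

theorem union_row (h : EmptyStrip S y₀ y₁) (V : Finset ℝ) {y : ℝ} (hy : y < y₀ ∨ y₁ < y) :
    EmptyStrip (S ∪ row V y) y₀ y₁ := by
  grind [EmptyStrip]

theorem exists_lt (h : EmptyStrip S y₀ y₁) : ∃ z < y₀, EmptyStrip S z y₁ := by
  obtain ⟨z, hz, hlt⟩ := exists_lt_forall_mem_lt (S.image Prod.snd) y₀
  exact ⟨z, hz, fun p hp => (h p hp).imp_left (hlt _ (Finset.mem_image_of_mem _ hp))⟩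

theorem exists_gt (h : EmptyStrip S y₀ y₁) : ∃ z > y₁, EmptyStrip S y₀ z := by
  obtain ⟨z, hz, hgt⟩ := exists_gt_forall_mem_gt (S.image Prod.snd) y₁
  exact ⟨z, hz, fun p hp => (h p hp).imp_right (hgt _ (Finset.mem_image_of_mem _ hp))⟩

end EmptyStrip

theorem exists_strictMono_apply_eq {𝕜 : Type*} [Field 𝕜] [LinearOrder 𝕜] [IsStrictOrderedRing 𝕜]
    {lo p q hi : 𝕜} (hlo : lo < p) (hpq : p ≤ q) (hhi : q < hi) :
    ∃ g : 𝕜 → 𝕜, StrictMono g ∧ g p = q ∧ (∀ t ≤ lo, g t = t) ∧ ∀ t ≥ hi, g t = t := by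
  set r := (q - lo) / (p - lo)
  set s := (hi - q) / (hi - p)
  have hr_one : 1 ≤ r := (one_le_div (by linarith)).2 (by linarith)
  have hs_pos : 0 < s := div_pos (by linarith) (by linarith)
  have hs_one : s ≤ 1 := (div_le_one (by linarith)).2 (by linarith)
  have hr_lo : r * (p - lo) = q - lo := div_mul_cancel₀ _ (by linarith)
  have hs_hi : s * (hi - p) = hi - q := div_mul_cancel₀ _ (by linarith)
  -- The lines of slopes `r` and `s` through `(p, q)` meet the diagonal at `lo` and `hi`.
  refine ⟨fun t => max t (min (q + r * (t - p)) (q + s * (t - p))), fun x y hxy => ?_, ?_,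
    fun t ht => ?_, fun t ht => ?_⟩
  · exact max_lt_max hxy (min_lt_min (by nlinarith) (by nlinarith))
  · simpa using hpq
  · exact max_eq_left (min_le_of_left_le (by nlinarith))
  · exact max_eq_left (min_le_of_right_le (by nlinarith))

section Rows

variable {S : GRD} {y₀ y₁ : ℝ}

theorem reducedEquiv_translate_row (V : Finset ℝ) (hy : y₀ ≤ y₁) (hS : EmptyStrip S y₀ y₁) :
    S ∪ row V y₀ ≈ S ∪ row V y₁ := by
  obtain ⟨lo, hlo, hSlo⟩ := hS.exists_lt
  obtain ⟨hi, hhi, hShi⟩ := hSlo.exists_gt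
  obtain ⟨g, hg, hgy, hg_lo, hg_hi⟩ := exists_strictMono_apply_eq hlo hy hhi
  have hgS : ∀ p ∈ S, g p.2 = p.2 := fun p hp =>
    (hShi p hp).elim (fun h => hg_lo _ h.le) (fun h => hg_hi _ h.le)
  refine .of_combEquiv ⟨id, g, strictMono_id, hg, ?_⟩
  have hS_image : S.image (Prod.map id g) = S :=
    (Finset.image_congr fun p hp =>
      show Prod.map id g p = id p from Prod.ext rfl (hgS p hp)).trans Finset.image_id
  change _ = (S ∪ row V y₀).image (Prod.map id g)
  rw [Finset.image_union, hS_image, image_row, Finset.image_id, hgy]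

theorem reducedEquiv_shift_down {V : Finset ℝ} {x₁ x₂ : ℝ} (hx : x₁ < x₂) (hx₂ : x₂ ∈ V)
    (hV : ∀ t ∈ V, t < x₁ ∨ x₂ ≤ t) (hy : y₀ < y₁) (hS : EmptyStrip S y₀ y₁) :
    S ∪ row (insert x₁ V) y₁ ≈ S ∪ row {x₁, x₂} y₀ ∪ row V y₁ := by
  refine .of_endShift (.inr ⟨y₁, x₁, x₂, y₁ - y₀, sub_pos.2 hy, hx, by simp, by simp [hx₂], ?_,
    .inr ⟨?_, ?_⟩⟩)
  · grind [EmptyStrip]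
  · grind [EmptyStrip]
  · ext ⟨x, t⟩
    grind [EmptyStrip]

theorem reducedEquiv_shift_up {V : Finset ℝ} {x₁ x₂ : ℝ} (hx : x₁ < x₂) (hx₁ : x₁ ∈ V)
    (hV : ∀ t ∈ V, t ≤ x₁ ∨ x₂ < t) (hy : y₀ < y₁) (hS : EmptyStrip S y₀ y₁) :
    S ∪ row (insert x₂ V) y₀ ≈ S ∪ row {x₁, x₂} y₁ ∪ row V y₀ := by
  refine .of_endShift (.inr ⟨y₀, x₁, x₂, y₁ - y₀, sub_pos.2 hy, hx, by simp [hx₁], by simp, ?_,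
    .inl ⟨?_, ?_⟩⟩)
  · grind [EmptyStrip]
  · grind [EmptyStrip]
  · ext ⟨x, t⟩
    grind [EmptyStrip]

theorem reducedEquiv_split_below {U Q : Finset ℝ} {a : ℝ} (ha : a ∈ U) (hQa : ∀ q ∈ Q, q < a)
    (hUQ : ∀ u ∈ U, ∀ q ∈ Q, u < q ∨ a ≤ u) (hy : y₀ < y₁) (hS : EmptyStrip S y₀ y₁) :
    S ∪ row (U ∪ Q) y₁ ≈ S ∪ row (insert a Q) y₀ ∪ row U y₁ := by
  induction Q using Finset.induction_on_max generalizing S with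
  | empty =>
    refine .of_vertexAddition ⟨(a, y₀), ?_, ?_, .inl ⟨⟨(a, y₁), by simp [ha], rfl⟩, ?_⟩⟩
    · grind [EmptyStrip]
    · ext; grind
    · grind [EmptyStrip]
  | insert q Q hq ih =>
    obtain ⟨z, hz, hSz⟩ := hS.exists_lt
    -- Park `q` on a row below `y₀` while the rest of `Q` is split off, then lift it to `y₀`.
    calc S ∪ row (U ∪ insert q Q) y₁
        = S ∪ row (insert q (U ∪ Q)) y₁ := by rw [Finset.union_insert]
      _ ≈ S ∪ row {q, a} z ∪ row (U ∪ Q) y₁ :=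
        reducedEquiv_shift_down (by grind) (by grind) (by grind) (hz.trans hy) hSz
      _ ≈ S ∪ row {q, a} z ∪ row (insert a Q) y₀ ∪ row U y₁ :=
        ih (by grind) (by grind) (hS.union_row _ (.inl hz))
      _ = S ∪ row U y₁ ∪ row {q, a} z ∪ row (insert a Q) y₀ := by ac_rfl
      _ ≈ S ∪ row U y₁ ∪ row (insert q (insert a Q)) y₀ :=
        (reducedEquiv_shift_down (by grind) (by grind) (by grind) hz
          ((hSz.mono le_rfl hy.le).union_row U (.inr hy))).symm
      _ = S ∪ row (insert a (insert q Q)) y₀ ∪ row U y₁ := by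
        rw [Finset.insert_comm, Finset.union_right_comm]

theorem reducedEquiv_split_above {L Q : Finset ℝ} {b : ℝ} (hb : b ∈ L) (hbQ : ∀ q ∈ Q, b < q)
    (hLQ : ∀ l ∈ L, ∀ q ∈ Q, l ≤ b ∨ q < l) (hy : y₀ < y₁) (hS : EmptyStrip S y₀ y₁) :
    S ∪ row (L ∪ Q) y₀ ≈ S ∪ row (insert b Q) y₁ ∪ row L y₀ := by
  induction Q using Finset.induction_on_min generalizing S with
  | empty =>
    refine .of_vertexAddition ⟨(b, y₁), ?_, ?_, .inl ⟨⟨(b, y₀), by simp [hb], rfl⟩, ?_⟩⟩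
    · grind [EmptyStrip]
    · ext; grind
    · grind [EmptyStrip]
  | insert q Q hq ih =>
    obtain ⟨z, hz, hSz⟩ := hS.exists_gt
    calc S ∪ row (L ∪ insert q Q) y₀
        = S ∪ row (insert q (L ∪ Q)) y₀ := by rw [Finset.union_insert]
      _ ≈ S ∪ row {b, q} z ∪ row (L ∪ Q) y₀ :=
        reducedEquiv_shift_up (by grind) (by grind) (by grind) (hy.trans hz) hSz
      _ ≈ S ∪ row {b, q} z ∪ row (insert b Q) y₁ ∪ row L y₀ :=
        ih (by grind) (by grind) (hS.union_row _ (.inr hz))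
      _ = S ∪ row L y₀ ∪ row {b, q} z ∪ row (insert b Q) y₁ := by ac_rfl
      _ ≈ S ∪ row L y₀ ∪ row (insert q (insert b Q)) y₁ :=
        (reducedEquiv_shift_up (by grind) (by grind) (by grind) hz
          ((hSz.mono hy.le le_rfl).union_row L (.inl hy))).symm
      _ = S ∪ row (insert b (insert q Q)) y₁ ∪ row L y₀ := by
        rw [Finset.insert_comm, Finset.union_right_comm]

theorem reducedEquiv_swap_rows {V W : Finset ℝ} (hV : V.Nonempty) (hW : W.Nonempty)
    (hVW : ¬ Interleave (· ∈ V) (· ∈ W)) (hy : y₀ < y₁) (hS : EmptyStrip S y₀ y₁) :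
    S ∪ row V y₀ ∪ row W y₁ ≈ S ∪ row V y₁ ∪ row W y₀ := by
  obtain ⟨v, hv⟩ := hV
  obtain ⟨w, hw⟩ := hW
  have mem_row₀ : ∀ x, (x, y₀) ∈ S ∪ row V y₀ ∪ row W y₁ ↔ x ∈ V := by grind [EmptyStrip]
  have mem_row₁ : ∀ x, (x, y₁) ∈ S ∪ row V y₀ ∪ row W y₁ ↔ x ∈ W := by grind [EmptyStrip]
  refine .of_commutation (.inr ⟨y₀, y₁, hy, ⟨(v, y₀), by simp [hv], rfl⟩,
    ⟨(w, y₁), by simp [hw], rfl⟩, by grind [EmptyStrip], by simpa only [mem_row₀, mem_row₁], ?_⟩)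
  ext ⟨x, t⟩
  simp only [swapRows, Finset.mem_image, Finset.mem_union, mem_row, Prod.exists]
  constructor
  · rintro ((h | ⟨h, rfl⟩) | ⟨h, rfl⟩)
    · exact ⟨x, t, by grind [EmptyStrip]⟩
    · exact ⟨x, y₀, by grind⟩
    · exact ⟨x, y₁, by grind⟩
  · grind [EmptyStrip]

end Rows

section FreeEdge

variable {R : GRD} {a b u v : ℝ}

theorem not_interleave_pair {V : Finset ℝ} (hV : ∀ x ∈ V, x ∈ Set.Icc b a) :
    ¬ Interleave (· ∈ ({b, a} : Finset ℝ)) (· ∈ V) := by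
  grind [Interleave]

theorem reducedEquiv_exchange_free_edge {S : GRD} {V : Finset ℝ} {w : ℝ} (hV : V.Nonempty)
    (hVab : ∀ x ∈ V, x ∈ Set.Icc b a) (huv : u < v) (hvw : v < w) (hS : EmptyStrip S u w) :
    S ∪ row V v ∪ row {b, a} u ≈ S ∪ row V v ∪ row {b, a} w :=
  calc S ∪ row V v ∪ row {b, a} u
      = S ∪ row {b, a} u ∪ row V v := Finset.union_right_comm _ _ _
    _ ≈ S ∪ row {b, a} v ∪ row V u :=
      reducedEquiv_swap_rows (by simp) hV (not_interleave_pair hVab) huv (hS.mono le_rfl hvw.le)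
    _ = S ∪ row V u ∪ row {b, a} v := Finset.union_right_comm _ _ _
    _ ≈ S ∪ row V u ∪ row {b, a} w :=
      reducedEquiv_translate_row _ hvw.le ((hS.mono huv.le le_rfl).union_row V (.inl huv))
    _ = S ∪ row {b, a} w ∪ row V u := Finset.union_right_comm _ _ _
    _ ≈ S ∪ row {b, a} w ∪ row V v :=
      reducedEquiv_translate_row _ huv.le ((hS.mono le_rfl hvw.le).union_row _ (.inr hvw))
    _ = S ∪ row V v ∪ row {b, a} w := Finset.union_right_comm _ _ _

/-- The abscissae of the vertices of `R` at height `y`. -/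
noncomputable def rowAt (R : GRD) (y : ℝ) : Finset ℝ := (R.filter (·.2 = y)).image Prod.fst

@[simp, grind =]
theorem mem_rowAt {y x : ℝ} : x ∈ rowAt R y ↔ (x, y) ∈ R := by
  simp [rowAt]

theorem filter_union_row_rowAt (R : GRD) (y : ℝ) :
    R.filter (·.2 ≠ y) ∪ row (rowAt R y) y = R := by
  ext ⟨x, t⟩
  grind

theorem reducedEquiv_free_edge_to_bottom {m : ℝ} (hR : ∀ p ∈ R, p.1 ∈ Set.Icc b a)
    (hu : ∀ p ∈ R, p.2 ≠ u) (hm : ∀ p ∈ R, m < p.2) (hmu : m < u) :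
    R ∪ row {b, a} u ≈ R ∪ row {b, a} m := by
  induction hF : (R.image Prod.snd).filter (· < u) using Finset.induction_on_max
    generalizing u with
  | empty =>
    have hle : ∀ p ∈ R, u ≤ p.2 := fun p hp =>
      not_lt.1 (Finset.filter_eq_empty_iff.1 hF (Finset.mem_image_of_mem _ hp))
    exact (reducedEquiv_translate_row _ hmu.le fun p hp =>
      .inr ((hle p hp).lt_of_ne' (hu p hp))).symm
  | insert v F hFv ih =>
    have hF_mem : ∀ t, t ∈ insert v F ↔ (∃ p ∈ R, p.2 = t) ∧ t < u := by simp [← hF]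
    obtain ⟨⟨q, hq, rfl⟩, hqu⟩ := (hF_mem v).1 (Finset.mem_insert_self v F)
    have hq_max : ∀ p ∈ R, p.2 < u → p.2 ≤ q.2 := by grind
    obtain ⟨w, hwq, hw⟩ := exists_lt_forall_mem_lt (insert m (R.image Prod.snd)) q.2
    have hmw : m < w := hw m (Finset.mem_insert_self _ _) (hm q hq)
    have hw_below : ∀ p ∈ R, p.2 < q.2 → p.2 < w := fun p hp =>
      hw _ (Finset.mem_insert_of_mem (Finset.mem_image_of_mem _ hp))
    have hF_w : (R.image Prod.snd).filter (· < w) = F := by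
      ext t
      rw [Finset.mem_filter, Finset.mem_image]
      constructor
      · rintro ⟨hpt, htw⟩
        exact Finset.mem_of_mem_insert_of_ne ((hF_mem t).2 ⟨hpt, (htw.trans hwq).trans hqu⟩)
          (htw.trans hwq).ne
      · intro ht
        obtain ⟨⟨p, hp, rfl⟩, -⟩ := (hF_mem t).1 (Finset.mem_insert_of_mem ht)
        exact ⟨⟨p, hp, rfl⟩, hw_below p hp (hFv _ ht)⟩
    calc R ∪ row {b, a} u
        = R.filter (·.2 ≠ q.2) ∪ row (rowAt R q.2) q.2 ∪ row {b, a} u := by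
          rw [filter_union_row_rowAt]
      _ ≈ R.filter (·.2 ≠ q.2) ∪ row (rowAt R q.2) q.2 ∪ row {b, a} w :=
        (reducedEquiv_exchange_free_edge ⟨q.1, mem_rowAt.2 hq⟩
          (fun x hx => hR _ (mem_rowAt.1 hx)) hwq hqu (by grind [EmptyStrip])).symm
      _ = R ∪ row {b, a} w := by rw [filter_union_row_rowAt]
      _ ≈ R ∪ row {b, a} m := ih (by grind) hmw hF_w

theorem reducedEquiv_move_free_edge (hR : ∀ p ∈ R, p.1 ∈ Set.Icc b a)
    (hu : ∀ p ∈ R, p.2 ≠ u) (hv : ∀ p ∈ R, p.2 ≠ v) :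
    R ∪ row {b, a} u ≈ R ∪ row {b, a} v := by
  obtain ⟨l, hl⟩ := (insert u (insert v (R.image Prod.snd))).bddBelow
  obtain ⟨m, hm⟩ := exists_lt l
  have hmR : ∀ p ∈ R, m < p.2 := fun p hp => 
    hm.trans_le (hl (by simpa using .inr (.inr ⟨p.1, hp⟩)))
  calc R ∪ row {b, a} u
      ≈ R ∪ row {b, a} m :=
        reducedEquiv_free_edge_to_bottom hR hu hmR (hm.trans_le (hl (by simp)))
    _ ≈ R ∪ row {b, a} v :=
        (reducedEquiv_free_edge_to_bottom hR hv hmR (hm.trans_le (hl (by simp)))).symm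

end FreeEdge

section Column

variable {D R : GRD} {a b u : ℝ}

theorem reducedEquiv_slide_vertex {y : ℝ} (hba : b < a) (hD : ∀ p ∈ D, p.1 ∈ Set.Icc b a)
    (hy : ∀ p ∈ D, p.2 = y → p.1 ∈ Set.Ioo b a) (hu : ∀ p ∈ D, p.2 ≠ u) (huy : u ≠ y) :
    insert (a, y) D ∪ row {b, a} u ≈ insert (b, y) D ∪ row {b, a} u := by
  set S := D.filter (·.2 ≠ y)
  set Q := rowAt D y
  have hQ_mem : ∀ q ∈ Q, q ∈ Set.Ioo b a := fun q hq => hy _ (mem_rowAt.1 hq) rfl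
  have hinsert : ∀ x, S ∪ row (insert x Q) y = insert (x, y) D := by
    intro x
    ext ⟨s, t⟩
    grind
  have hS_y : EmptyStrip S y y := fun p hp => lt_or_gt_of_ne (Finset.mem_filter.1 hp).2
  obtain ⟨z, hzy, hSz⟩ := hS_y.exists_lt
  obtain ⟨w, hyw, hSw⟩ := hSz.exists_gt
  calc insert (a, y) D ∪ row {b, a} u
      ≈ insert (a, y) D ∪ row {b, a} w :=
        reducedEquiv_move_free_edge (by grind) (by grind) (by grind [EmptyStrip])
    _ = S ∪ row (insert a Q) y ∪ row {b, a} w := by rw [hinsert]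
    _ ≈ S ∪ row ({b, a} ∪ Q) w :=
        (reducedEquiv_split_below (by simp) (by grind) (by grind) hyw
          (hSw.mono hzy.le le_rfl)).symm
    _ ≈ S ∪ row ({b, a} ∪ Q) z := (reducedEquiv_translate_row _ (hzy.trans hyw).le hSw).symm
    _ ≈ S ∪ row (insert b Q) y ∪ row {b, a} z :=
        reducedEquiv_split_above (by simp) (by grind) (by grind) hzy hSz
    _ = insert (b, y) D ∪ row {b, a} z := by rw [hinsert]
    _ ≈ insert (b, y) D ∪ row {b, a} u :=
        reducedEquiv_move_free_edge (by grind) (by grind [EmptyStrip]) (by grind)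

/-- The vertices of abscissa `x` whose heights form the set `Y`. -/
def column (x : ℝ) (Y : Finset ℝ) : GRD := {x} ×ˢ Y

@[simp, grind =]
theorem mem_column {x : ℝ} {Y : Finset ℝ} {p : ℝ × ℝ} : p ∈ column x Y ↔ p.1 = x ∧ p.2 ∈ Y := by
  rw [column, Finset.mem_product, Finset.mem_singleton]

theorem union_column_insert (D : GRD) (x y : ℝ) (Y : Finset ℝ) :
    D ∪ column x (insert y Y) = insert (x, y) (D ∪ column x Y) := by
  ext ⟨s, t⟩
  grind

theorem reducedEquiv_slide_column {Y : Finset ℝ} (hba : b < a) (hD : ∀ p ∈ D, p.1 ∈ Set.Icc b a)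
    (hY : ∀ p ∈ D, p.2 ∈ Y → p.1 ∈ Set.Ioo b a) (hu : ∀ p ∈ D, p.2 ≠ u) (huY : u ∉ Y) :
    D ∪ column a Y ∪ row {b, a} u ≈ D ∪ column b Y ∪ row {b, a} u := by
  induction Y using Finset.induction_on generalizing D with
  | empty => exact .refl _
  | insert y Y hyY ih =>
    calc D ∪ column a (insert y Y) ∪ row {b, a} u
        = insert (a, y) (D ∪ column a Y) ∪ row {b, a} u := by rw [union_column_insert]
      _ ≈ insert (b, y) (D ∪ column a Y) ∪ row {b, a} u :=
        reducedEquiv_slide_vertex hba (by grind) (by grind) (by grind) (by grind)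
      _ = insert (b, y) D ∪ column a Y ∪ row {b, a} u := by simp only [Finset.insert_union]
      _ ≈ insert (b, y) D ∪ column b Y ∪ row {b, a} u :=
        ih (by grind) (by grind) (by grind) (by grind)
      _ = D ∪ column b (insert y Y) ∪ row {b, a} u := by
        simp only [union_column_insert, Finset.insert_union]

theorem reducedEquiv_union_free_edge (hb : ∃ p ∈ R, p.1 = b) (ha : ∀ p ∈ R, p.1 ≠ a)
    (hu : ∀ p ∈ R, p.2 ≠ u) : R ≈ R ∪ row {b, a} u := by
  obtain ⟨q, hq, rfl⟩ := hb
  have hqu : VertexAddition R (insert (q.1, u) R) :=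
    ⟨(q.1, u), fun h => hu _ h rfl, rfl, .inl ⟨⟨q, hq, rfl⟩, hu⟩⟩
  have hau : VertexAddition (insert (q.1, u) R) (R ∪ row {q.1, a} u) := by
    refine ⟨(a, u), by grind, ?_, .inr ⟨⟨(q.1, u), by simp, rfl⟩, by grind⟩⟩
    ext ⟨s, t⟩
    grind
  exact .trans (.of_vertexAddition hqu) (.of_vertexAddition hau)

theorem reducedEquiv_rotate_column {S : GRD} {Y : Finset ℝ} (hba : b < a) (hY : Y.Nonempty)
    (hS : ∀ p ∈ S, p.1 ∈ Set.Ioo b a) : S ∪ column a Y ≈ S ∪ column b Y := by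
  obtain ⟨y, hy⟩ := hY
  obtain ⟨u, hu⟩ := (S.image Prod.snd ∪ Y).exists_notMem
  calc S ∪ column a Y
      ≈ S ∪ column a Y ∪ row {a, b} u :=
        reducedEquiv_union_free_edge ⟨(a, y), by simp [hy], rfl⟩ (by grind) (by grind)
    _ = S ∪ column a Y ∪ row {b, a} u := by rw [Finset.pair_comm]
    _ ≈ S ∪ column b Y ∪ row {b, a} u :=
        reducedEquiv_slide_column hba (by grind) (by grind) (by grind) (by grind)
    _ ≈ S ∪ column b Y :=
        (reducedEquiv_union_free_edge ⟨(b, y), by simp [hy], rfl⟩ (by grind) (by grind)).symm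

/-- The heights of the vertices of `R` of abscissa `x`. -/
noncomputable def columnAt (R : GRD) (x : ℝ) : Finset ℝ := (R.filter (·.1 = x)).image Prod.snd

@[simp, grind =]
theorem mem_columnAt {x y : ℝ} : y ∈ columnAt R x ↔ (x, y) ∈ R := by
  simp [columnAt]

theorem filter_union_column_columnAt (R : GRD) (x : ℝ) :
    R.filter (·.1 ≠ x) ∪ column x (columnAt R x) = R := by
  ext ⟨s, t⟩
  grind

theorem moveCol_eq_filter_union_column (R : GRD) (a b : ℝ) :
    moveCol R a b = R.filter (·.1 ≠ a) ∪ column b (columnAt R a) := by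
  ext ⟨s, t⟩
  simp only [moveCol, Finset.mem_image, Prod.exists]
  grind

theorem reducedEquiv_moveCol (ha : ∃ p ∈ R, p.1 = a)
    (hab : ((∀ p ∈ R, p.1 ≤ a) ∧ ∀ p ∈ R, b < p.1) ∨ ((∀ p ∈ R, a ≤ p.1) ∧ ∀ p ∈ R, p.1 < b)) :
    R ≈ moveCol R a b := by
  obtain ⟨q, hq, rfl⟩ := ha
  have hne : (columnAt R q.1).Nonempty := ⟨q.2, mem_columnAt.2 hq⟩
  rw [moveCol_eq_filter_union_column]
  nth_rw 1 [← filter_union_column_columnAt R q.1]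
  rcases hab with ⟨hle, hlt⟩ | ⟨hle, hlt⟩
  · exact reducedEquiv_rotate_column (hlt q hq) hne (by grind)
  · exact (reducedEquiv_rotate_column (hlt q hq) hne (by grind)).symm

end Column

section Transpose

variable {typeL : Bool} {R R' : GRD}

/-- The mirror image of a diagram in the line `x = y`, which exchanges its rows and its
columns. -/
noncomputable def transpose (R : GRD) : GRD := R.image Prod.swap

@[simp, grind =]
theorem mem_transpose {p : ℝ × ℝ} : p ∈ transpose R ↔ p.swap ∈ R :=
  Prod.swap_injective.mem_finset_image (a := p.swap)

theorem forall_mem_transpose {P : ℝ × ℝ → Prop} :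
    (∀ p ∈ transpose R, P p) ↔ ∀ p ∈ R, P p.swap :=
  Finset.forall_mem_image

theorem exists_mem_transpose {P : ℝ × ℝ → Prop} :
    (∃ p ∈ transpose R, P p) ↔ ∃ p ∈ R, P p.swap :=
  Finset.exists_mem_image

theorem transpose_transpose (R : GRD) : transpose (transpose R) = R := by
  ext
  simp

theorem transpose_insert (p : ℝ × ℝ) (R : GRD) :
    transpose (insert p R) = insert p.swap (transpose R) :=
  Finset.image_insert ..

theorem transpose_erase (R : GRD) (p : ℝ × ℝ) :
    transpose (R.erase p) = (transpose R).erase p.swap :=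
  Finset.image_erase Prod.swap_injective R p

theorem transpose_image {f g : ℝ × ℝ → ℝ × ℝ} (hfg : ∀ p, (f p).swap = g p.swap) (R : GRD) :
    transpose (R.image f) = (transpose R).image g :=
  Finset.image_comm hfg

theorem transpose_moveCol (R : GRD) (a b : ℝ) :
    transpose (moveCol R a b) = moveRow (transpose R) a b :=
  transpose_image (fun p => by dsimp only [Prod.swap]; split_ifs <;> rfl) R

theorem transpose_swapCols (R : GRD) (a b : ℝ) :
    transpose (swapCols R a b) = swapRows (transpose R) a b :=
  transpose_image (fun p => by dsimp only [Prod.swap]; split_ifs <;> rfl) R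

theorem transpose_swapRows (R : GRD) (a b : ℝ) :
    transpose (swapRows R a b) = swapCols (transpose R) a b := by
  rw [← transpose_transpose (swapCols _ a b), transpose_swapCols, transpose_transpose]

theorem Commutation.transpose (h : Commutation R R') :
    Commutation (transpose R) (transpose R') := by
  simp only [Commutation, ↓exists_mem_transpose, ↓forall_mem_transpose, mem_transpose]
  refine h.symm.imp ?_ ?_ <;> rintro ⟨a, b, hab, ha, hb, hbetween, hlink, rfl⟩
  · exact ⟨a, b, hab, ha, hb, hbetween, hlink, transpose_swapRows R a b⟩
  · exact ⟨a, b, hab, ha, hb, hbetween, hlink, transpose_swapCols R a b⟩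

theorem EndShift.transpose (h : EndShift typeL R R') :
    EndShift typeL (transpose R) (transpose R') := by
  simp only [EndShift, ↓forall_mem_transpose, mem_transpose]
  refine h.symm.imp ?_ ?_ <;>
  · rintro ⟨a, s, t, ε, hε, hst, hs, ht, hadj, hshift⟩
    refine ⟨a, s, t, ε, hε, hst, hs, ht, hadj, hshift.imp ?_ ?_⟩ <;>
    · rintro ⟨hempty, rfl⟩
      exact ⟨hempty, by simp only [transpose_insert, transpose_erase, Prod.swap_prod_mk]⟩

theorem VertexAddition.transpose (h : VertexAddition R R') :
    VertexAddition (transpose R) (transpose R') := by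
  obtain ⟨v, hv, rfl, hline⟩ := h
  refine ⟨v.swap, by simpa, transpose_insert v R, ?_⟩
  simpa only [exists_mem_transpose, forall_mem_transpose, Prod.fst_swap,
    Prod.snd_swap] using hline.symm

theorem CombEquiv.transpose (h : CombEquiv R R') : CombEquiv (transpose R) (transpose R') := by
  obtain ⟨f, g, hf, hg, rfl⟩ := h
  exact ⟨g, f, hg, hf, transpose_image (g := fun p => (g p.1, f p.2)) (fun _ => rfl) R⟩

theorem ReducedEquiv.transpose (h : R ≈ R') : transpose R ≈ transpose R' := by
  induction h with
  | rel _ _ h =>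
    exact .rel _ _ (h.imp (·.transpose) (.imp (·.transpose) (.imp (·.transpose) (·.transpose))))
  | refl _ => exact .refl _
  | symm _ _ _ ih => exact ih.symm
  | trans _ _ _ _ _ ih₁ ih₂ => exact ReducedEquiv.trans ih₁ ih₂

end Transpose

section Moves

variable {typeL : Bool} {R R' : GRD}

theorem CyclicPermutation.reducedEquiv (h : CyclicPermutation R R') : R ≈ R' := by
  rcases h with ⟨a, b, ha, hab, rfl⟩ | ⟨a, b, ha, hab, rfl⟩
  · exact reducedEquiv_moveCol ha hab
  · have hcol : transpose R ≈ moveCol (transpose R) a b :=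
      reducedEquiv_moveCol (exists_mem_transpose.2 ha) (by simpa only [forall_mem_transpose])
    simpa only [transpose_moveCol, transpose_transpose] using hcol.transpose

theorem Stab.exists_vertexAddition_endShift (h : Stab typeL R R') :
    ∃ R₁, VertexAddition R R₁ ∧ EndShift typeL R₁ R' := by
  obtain ⟨x, y, x', y', hxy, hcorner, hx, hy, hx', hy', rfl⟩ := h
  refine ⟨insert (x, y') R, ⟨(x, y'), fun hmem => hy' _ hmem rfl, rfl, .inl ⟨⟨_, hxy, rfl⟩, hy'⟩⟩,
    .inl ?_⟩
  have hadj : ∀ t, (x, t) ∈ insert (x, y') R → ¬ strictlyBetween y t y' := by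
    grind [strictlyBetween]
  have hempty : ∀ p ∈ insert (x, y') R, p.1 ≠ x' ∧ ¬ strictlyBetween x p.1 x' := by
    grind [strictlyBetween]
  have heq : insert (x', y) (insert (x, y') (insert (x', y') (R.erase (x, y)))) =
      insert (x', y) (insert (x', y') ((insert (x, y') R).erase (x, y))) := by
    rw [Finset.erase_insert_of_ne (by grind), Finset.insert_comm (x, y')]
  rw [heq]
  cases typeL <;> rcases hcorner with ⟨hxx', hyy'⟩ | ⟨hxx', hyy'⟩
  · refine ⟨x, y, y', x - x', sub_pos.2 hxx', hyy', by simp [hxy], by simp, ?_, .inr ⟨?_, ?_⟩⟩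
    all_goals grind [strictlyBetween]
  · refine ⟨x, y', y, x' - x, sub_pos.2 hxx', hyy', by simp, by simp [hxy], ?_, .inl ⟨?_, ?_⟩⟩
    all_goals grind [strictlyBetween]
  · refine ⟨x, y, y', x' - x, sub_pos.2 hxx', hyy', by simp [hxy], by simp, ?_, .inl ⟨?_, ?_⟩⟩
    all_goals grind [strictlyBetween]
  · refine ⟨x, y', y, x - x', sub_pos.2 hxx', hyy', by simp, by simp [hxy], ?_, .inr ⟨?_, ?_⟩⟩
    all_goals grind [strictlyBetween]

theorem Stab.reducedEquiv (h : Stab false R R') : R ≈ R' :=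
  let ⟨_, hadd, hshift⟩ := h.exists_vertexAddition_endShift
  .trans (.of_vertexAddition hadd) (.of_endShift hshift)

theorem Step.reducedEquiv (h : Step false R R') : R ≈ R' := by
  rcases h with (h | h | h | h | h | h) | h
  · exact h.reducedEquiv
  · exact .of_commutation h
  · exact h.reducedEquiv
  · exact h.reducedEquiv.symm
  · exact .of_endShift h
  · exact .of_vertexAddition h
  · exact .of_combEquiv h

theorem ReducedStep.step (h : ReducedStep R R') : Step false R R' := by
  rcases h with h | h | h | h
  · exact .inl (.inr (.inl h))
  · exact .inl (.inr (.inr (.inr (.inr (.inl h)))))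
  · exact .inl (.inr (.inr (.inr (.inr (.inr h)))))
  · exact .inr h

end Moves

/-- the equivalence relation on generalized rectangular diagrams generated
by the elementary moves of type N coincides with the equivalence relation generated by
commutations, end shifts of type N and vertex additions alone (diagrams being
identified up to combinatorial equivalence throughout). -/
theorem statement1 :
    Relation.EqvGen (Step false) =
      Relation.EqvGen (fun R R' : GRD =>
        Commutation R R' ∨ EndShift false R R' ∨ VertexAddition R R' ∨ CombEquiv R R') :=
  le_antisymm (Relation.EqvGen.eqvGen_le fun _ _ => Step.reducedEquiv)
    (Relation.EqvGen.mono fun _ _ => ReducedStep.step)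

end RectDiag
end

section
/- If a generalized rectangular diagram R' is obtained from a generalized rectangular diagram R by a stabilization of type L, then R' can be obtained from R by performing one vertex addition followed by one end shift of type L. -/
namespace RectDiag

theorem CombEquiv.refl (R : GRD) : CombEquiv R R :=
  ⟨id, id, strictMono_id, strictMono_id, Finset.image_id.symm⟩

theorem not_strictlyBetween_self_left (a b : ℝ) : ¬ strictlyBetween a a b := by
  simp [strictlyBetween]

theorem not_strictlyBetween_self_right (a b : ℝ) : ¬ strictlyBetween a b b := by
  simp [strictlyBetween]

/-- The point `(x', y')` can be the corner opposite to the vertex `(x, y)` in the square of a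
stabilization of the given type: it lies to the upper right or lower left of `(x, y)` for
type L, to the upper left or lower right for type N.  It unfolds to the side condition
in `Stab`. -/
def IsOppositeCorner (typeL : Bool) (x y x' y' : ℝ) : Prop :=
  if typeL then ((x < x' ∧ y < y') ∨ (x' < x ∧ y' < y))
  else ((x' < x ∧ y < y') ∨ (x < x' ∧ y' < y))

theorem vertexAddition_insert_in_column {R : GRD} {x y y' : ℝ} (hv : (x, y) ∈ R)
    (hrow : ∀ p ∈ R, p.2 ≠ y') : VertexAddition R (insert (x, y') R) :=
  ⟨(x, y'), fun h => hrow _ h rfl, rfl, .inl ⟨⟨_, hv, rfl⟩, hrow⟩⟩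

section ColumnShift

variable {S : GRD} {x x' : ℝ}

theorem endShift_right (typeL : Bool) {y₁ y₂ : ℝ} (hx : x < x') (hy : y₁ < y₂)
    (h₁ : (x, y₁) ∈ S) (h₂ : (x, y₂) ∈ S)
    (hadj : ∀ t, (x, t) ∈ S → ¬ (y₁ < t ∧ t < y₂))
    (hgap : ∀ p ∈ S, ¬ (x < p.1 ∧ p.1 ≤ x')) :
    EndShift typeL S (insert (x', y₁) (insert (x', y₂)
      (S.erase (x, if typeL then y₁ else y₂)))) := by
  have hx' : x + (x' - x) = x' := add_sub_cancel x x'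
  refine .inl ⟨x, y₁, y₂, x' - x, sub_pos.2 hx, hy, h₁, h₂, hadj, .inl ?_⟩
  rw [hx']
  exact ⟨hgap, rfl⟩

theorem endShift_left (typeL : Bool) {y₁ y₂ : ℝ} (hx : x' < x) (hy : y₁ < y₂)
    (h₁ : (x, y₁) ∈ S) (h₂ : (x, y₂) ∈ S)
    (hadj : ∀ t, (x, t) ∈ S → ¬ (y₁ < t ∧ t < y₂))
    (hgap : ∀ p ∈ S, ¬ (x' ≤ p.1 ∧ p.1 < x)) :
    EndShift typeL S (insert (x', y₁) (insert (x', y₂)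
      (S.erase (x, if typeL then y₂ else y₁)))) := by
  have hx' : x - (x - x') = x' := sub_sub_cancel x x'
  refine .inl ⟨x, y₁, y₂, x - x', sub_pos.2 hx, hy, h₁, h₂, hadj, .inr ?_⟩
  rw [hx']
  exact ⟨hgap, rfl⟩

theorem endShift_of_isOppositeCorner {typeL : Bool} {y y' : ℝ}
    (hcorner : IsOppositeCorner typeL x y x' y') (hv : (x, y) ∈ S) (hw : (x, y') ∈ S)
    (hadj : ∀ t, (x, t) ∈ S → ¬ strictlyBetween y t y')
    (hgap : ∀ p ∈ S, ¬ strictlyBetween x p.1 x') (hcol : ∀ p ∈ S, p.1 ≠ x') :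
    EndShift typeL S (insert (x', y) (insert (x', y') (S.erase (x, y)))) := by
  have hup : ∀ t, (x, t) ∈ S → ¬ (y < t ∧ t < y') := fun t ht h => hadj t ht (.inl h)
  have hdown : ∀ t, (x, t) ∈ S → ¬ (y' < t ∧ t < y) := fun t ht h => hadj t ht (.inr h)
  have hright : ∀ p ∈ S, ¬ (x < p.1 ∧ p.1 ≤ x') := fun p hp ⟨hxp, hpx'⟩ =>
    hgap p hp (.inl ⟨hxp, hpx'.lt_of_ne (hcol p hp)⟩)
  have hleft : ∀ p ∈ S, ¬ (x' ≤ p.1 ∧ p.1 < x) := fun p hp ⟨hx'p, hpx⟩ =>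
    hgap p hp (.inr ⟨hx'p.lt_of_ne' (hcol p hp), hpx⟩)
  cases typeL
  case true =>
    rcases hcorner with ⟨hx, hy⟩ | ⟨hx, hy⟩
    · exact endShift_right true hx hy hv hw hup hright
    · rw [Finset.insert_comm]
      exact endShift_left true hx hy hw hv hdown hleft
  case false =>
    rcases hcorner with ⟨hx, hy⟩ | ⟨hx, hy⟩
    · exact endShift_left false hx hy hv hw hup hleft
    · rw [Finset.insert_comm]
      exact endShift_right false hx hy hw hv hdown hright

end ColumnShift

/-- Adding the corner `(x, y')` of the square creates a short vertical edge from `(x, y)` to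
`(x, y')`.  Shifting it to the line `x'` adds the other two corners, and the types match so
that the vertex removed is `(x, y)`. -/
theorem statement2_general {typeL : Bool} {R R' : GRD} (h : Stab typeL R R') :
    ∃ S : GRD, VertexAddition R S ∧ EndShift typeL S R' := by
  obtain ⟨x, y, x', y', hv, hcorner, hxgap, hygap, hcol, hrow, rfl⟩ := h
  have hne : (x, y') ≠ (x, y) := fun h => hrow _ hv (congrArg Prod.snd h).symm
  have hadj : ∀ t, (x, t) ∈ insert (x, y') R → ¬ strictlyBetween y t y' := by
    intro t ht
    rcases Finset.mem_insert.1 ht with heq | ht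
    · obtain rfl : t = y' := congrArg Prod.snd heq
      exact not_strictlyBetween_self_right y t
    · exact hygap _ ht
  have hxgap' : ∀ p ∈ insert (x, y') R, ¬ strictlyBetween x p.1 x' :=
    Finset.forall_mem_insert _ _ _ |>.2 ⟨not_strictlyBetween_self_left x x', hxgap⟩
  have hcol' : ∀ p ∈ insert (x, y') R, p.1 ≠ x' :=
    Finset.forall_mem_insert _ _ _ |>.2 ⟨hcol (x, y) hv, hcol⟩
  refine ⟨insert (x, y') R, vertexAddition_insert_in_column hv hrow, ?_⟩
  rw [Finset.insert_comm (x, y'), ← Finset.erase_insert_of_ne hne]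
  exact endShift_of_isOppositeCorner hcorner (Finset.mem_insert_of_mem hv)
    (Finset.mem_insert_self _ _) hadj hxgap' hcol'

/-- a stabilization of type L is the composition of one vertex addition
followed by one end shift of type L (up to the identification of combinatorially
equivalent diagrams). -/
theorem statement2 (R R' : GRD) (h : Stab true R R') :
    ∃ S T : GRD, VertexAddition R S ∧ EndShift true S T ∧ CombEquiv T R' := by
  obtain ⟨S, hadd, hshift⟩ := statement2_general h
  exact ⟨S, R', hadd, hshift, CombEquiv.refl R'⟩

end RectDiag
end
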